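/- arXiv:2110.03436 — 3 statements merged into one kernel-verified Lean document; each statement's English description precedes it below -/
import Mathlib

section
/- Let $T$ on $\ell^2$ be given by $T(x_1,x_2,\dots)=(0,\alpha x_1,x_2,x_3,\dots)$ with $\alpha\in(0,1)$, and set $S_1 = (n-2)I + 2T$, $S_{n-1} = 2T + (n-2)T^2$, $P = T^2$ for some integer $n \ge 3$. Then $S_1^* P \ne P S_1^*$. -/
open ContinuousLinearMap

local notation "ℓ²" => lp (fun _ : ℕ => ℂ) 2

/-!
For `d ≠ 0`, the adjoint of `c I + d T` commutes with the same operators as `T*`. If `T*` commutes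
with `T ^ (m + 1)`, then `T*` annihilates `T ^ (m + 1) x` for every `x ∈ ker T*`; being also in
the range of `T`, that vector vanishes, so `ker T* ≤ ker T ^ (m + 1)`. For a weighted shift, `e₀ ∈
ker T*`, and `eₖ₊₁ ∈ ker T*` whenever the weight `wₖ` is zero. Hence, by induction on `k`, every
product `wₖ ⋯ wₖ₊ₘ` of consecutive weights is zero.
-/

theorem commute_star_smul_one_add_smul_iff {𝕜 A : Type*} [Field 𝕜] [StarRing 𝕜] [Ring A]
    [StarRing A] [Algebra 𝕜 A] [StarModule 𝕜 A] (c : 𝕜) {d : 𝕜} (hd : d ≠ 0) {a b : A} :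
    Commute (star (c • 1 + d • a)) b ↔ Commute (star a) b := by
  have hd' : star d ≠ 0 := star_ne_zero.mpr hd
  simp only [commute_iff_eq, star_add, star_smul, star_one, add_mul, mul_add, smul_mul_assoc,
    mul_smul_comm, one_mul, mul_one, add_right_inj, smul_right_inj hd']

section Adjoint

variable {𝕜 E : Type*} [RCLike 𝕜] [NormedAddCommGroup E] [InnerProductSpace 𝕜 E] [CompleteSpace E]

theorem ker_adjoint_le_ker_mul_of_commute {A B : E →L[𝕜] E} (h : Commute (adjoint A) (A * B)) :
    (adjoint A).ker ≤ (A * B).ker := by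
  intro x hx
  have hABx : adjoint A (A (B x)) = 0 :=
    calc adjoint A (A (B x)) = A (B (adjoint A x)) := DFunLike.congr_fun h.eq x
      _ = 0 := by rw [show adjoint A x = 0 from hx, map_zero, map_zero]
  have hBx : B x ∈ (adjoint A ∘L A).ker := hABx
  rwa [ker_adjoint_comp_self] at hBx

theorem adjoint_single_eq_zero {ι : Type*} [DecidableEq ι] {G : ι → Type*}
    [∀ i, NormedAddCommGroup (G i)] [∀ i, InnerProductSpace 𝕜 (G i)] [∀ i, CompleteSpace (G i)]
    {T : E →L[𝕜] lp G 2} {i : ι} (hT : ∀ x, T x i = 0) (a : G i) :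
    adjoint T (lp.single 2 i a) = 0 := by
  refine ext_inner_right 𝕜 fun x => ?_
  rw [adjoint_inner_left, lp.inner_single_left, hT, inner_zero_right, inner_zero_left]

end Adjoint

/-- `T` is the unilateral weighted shift on `ℓ²(ℕ)` sending the basis vector `eₖ` to `wₖ eₖ₊₁`,
described by the coordinates of `T x`. -/
def IsWeightedShift {𝕜 : Type*} [RCLike 𝕜] (w : ℕ → 𝕜)
    (T : lp (fun _ : ℕ => 𝕜) 2 →L[𝕜] lp (fun _ : ℕ => 𝕜) 2) : Prop :=
  ∀ x, T x 0 = 0 ∧ ∀ k, T x (k + 1) = w k * x k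

namespace IsWeightedShift

variable {𝕜 : Type*} [RCLike 𝕜] {w : ℕ → 𝕜}
  {T : lp (fun _ : ℕ => 𝕜) 2 →L[𝕜] lp (fun _ : ℕ => 𝕜) 2}

theorem pow_apply_add (hT : IsWeightedShift w T) (m k : ℕ) (x : lp (fun _ : ℕ => 𝕜) 2) :
    (T ^ m) x (k + m) = (∏ i ∈ Finset.range m, w (k + i)) * x k := by
  induction m with
  | zero => simp
  | succ m ih =>
    calc (T ^ (m + 1)) x (k + (m + 1)) = T ((T ^ m) x) (k + m + 1) := by rw [pow_succ']; rfl
      _ = w (k + m) * ((∏ i ∈ Finset.range m, w (k + i)) * x k) := by rw [(hT _).2, ih]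
      _ = (∏ i ∈ Finset.range (m + 1), w (k + i)) * x k := by rw [Finset.prod_range_succ]; ring

theorem prod_eq_zero_of_adjoint_single_eq_zero (hT : IsWeightedShift w T) {m k : ℕ}
    (h : Commute (adjoint T) (T ^ (m + 1))) (hk : adjoint T (lp.single 2 k 1) = 0) :
    ∏ i ∈ Finset.range (m + 1), w (k + i) = 0 := by
  rw [pow_succ'] at h
  have hpow : (T ^ (m + 1)) (lp.single 2 k 1) = 0 := by
    rw [pow_succ']
    exact ker_adjoint_le_ker_mul_of_commute h hk
  simpa [hpow] using (hT.pow_apply_add (m + 1) k (lp.single 2 k 1)).symm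

theorem prod_eq_zero_of_commute (hT : IsWeightedShift w T) {m : ℕ}
    (h : Commute (adjoint T) (T ^ (m + 1))) (k : ℕ) :
    ∏ i ∈ Finset.range (m + 1), w (k + i) = 0 := by
  induction k with
  | zero =>
    exact hT.prod_eq_zero_of_adjoint_single_eq_zero h
      (adjoint_single_eq_zero (fun x => (hT x).1) 1)
  | succ k ih =>
    rw [Finset.prod_range_succ', mul_eq_zero] at ih
    rcases ih with htail | hwk
    · rw [Finset.prod_range_succ]
      simp only [add_right_comm k 1, add_assoc k, htail, zero_mul]
    · refine hT.prod_eq_zero_of_adjoint_single_eq_zero h (adjoint_single_eq_zero (fun x => ?_) 1)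
      rw [(hT x).2, ← add_zero k, hwk, zero_mul]

end IsWeightedShift

theorem isWeightedShift_update_one {𝕜 : Type*} [RCLike 𝕜] {α : 𝕜}
    {T : lp (fun _ : ℕ => 𝕜) 2 →L[𝕜] lp (fun _ : ℕ => 𝕜) 2}
    (hT : ∀ x, T x 0 = 0 ∧ T x 1 = α * x 0 ∧ ∀ k, T x (k + 2) = x (k + 1)) :
    IsWeightedShift (Function.update 1 0 α) T := by
  refine fun x => ⟨(hT x).1, fun k => ?_⟩
  cases k with
  | zero => simpa using (hT x).2.1
  | succ k => simpa using (hT x).2.2 k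

theorem stmt11_general {𝕜 : Type*} [RCLike 𝕜] {w : ℕ → 𝕜}
    {T : lp (fun _ : ℕ => 𝕜) 2 →L[𝕜] lp (fun _ : ℕ => 𝕜) 2} (hT : IsWeightedShift w T)
    {m k : ℕ} (hw : ∏ i ∈ Finset.range (m + 1), w (k + i) ≠ 0) (c : 𝕜) {d : 𝕜} (hd : d ≠ 0) :
    adjoint (c • 1 + d • T) * T ^ (m + 1) ≠ T ^ (m + 1) * adjoint (c • 1 + d • T) := fun h =>
  hw (hT.prod_eq_zero_of_commute ((commute_star_smul_one_add_smul_iff c hd).mp h) k)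

/-- Let `T` on `ℓ²` be `T(x₁,x₂,…) = (0, αx₁, x₂, x₃, …)` with `α ∈ (0,1)`
(coordinates indexed from `0`), and set `S₁ = (n-2)I + 2T` and `P = T²` for an integer
`n ≥ 3`.  Then `S₁* P ≠ P S₁*`. -/
theorem stmt11 (α : ℝ) (hα : 0 < α) (hα1 : α < 1)
    (T : ℓ² →L[ℂ] ℓ²)
    (hT : ∀ x : ℓ², (T x) 0 = 0 ∧ (T x) 1 = (α : ℂ) * x 0 ∧ ∀ k : ℕ, (T x) (k + 2) = x (k + 1))
    (n : ℕ) (hn : 3 ≤ n)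
    (S₁ : ℓ² →L[ℂ] ℓ²) (hS₁ : S₁ = ((n : ℂ) - 2) • (1 : ℓ² →L[ℂ] ℓ²) + (2 : ℂ) • T)
    (P : ℓ² →L[ℂ] ℓ²) (hP : P = T * T) :
    adjoint S₁ * P ≠ P * adjoint S₁ := by
  rw [hS₁, hP, ← pow_two]
  exact stmt11_general (k := 1) (isWeightedShift_update_one hT) (by simp) _ two_ne_zero
end

section
/- Let $T$ on $\ell^2$ be given by $T(x_1,x_2,\dots)=(0,\alpha x_1,x_2,\dots)$, $\alpha\in(0,1)$, $P=T^2$, $S_1=(n-2)I+2T$, $S_{n-1}=2T+(n-2)T^2$ for an integer $n\ge 3$. Define $B_1(x_1,x_2,x_3,\dots) = ((n-2)x_1 + 2\alpha x_2,\ (n-2)x_2 + 2\sqrt{1-\alpha^2}x_3,\ (n-2)x_3,\ 0,0,\dots)$ and $B_{n-1}(x_1,x_2,x_3,\dots) = (2\alpha x_2,\ 2\sqrt{1-\alpha^2}x_3,\ 0,0,\dots)$. Then $S_1^* - S_{n-1}P^* = D_{P^*}B_1 D_{P^*}$ and $S_{n-1}^* - S_1 P^* = D_{P^*}B_{n-1}D_{P^*}$.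 -/
open ContinuousLinearMap

local notation "ℓ²" => lp (fun _ : ℕ => ℂ) 2

/-!
Since `P = T²` and the coefficients of `S₁` and `S_{n-1}` are matched,
`S₁* - S_{n-1}P* = (n-2)(1 - PP*) + 2(T* - TP*)` and `S_{n-1}* - S₁P* = 2(T* - TP*)`.
For a weighted shift `T` the operators `TT*` and `PP*` are diagonal. When all weights after the
first have modulus one, `1 - PP*` and `T* - TP* = (1 - TT*)T*` live on the first three coordinates.
A positive operator acts on each eigenvector of its square by the nonnegative root of the
eigenvalue, which determines `D_{P*}`, and the identities are compared coordinate by coordinate.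
-/

open scoped ComplexConjugate

section PositiveOperator

variable {𝕜 H ι : Type*} [RCLike 𝕜]

theorem apply_eq_smul_of_isPositive_of_apply_apply_eq_sq_smul
    [NormedAddCommGroup H] [InnerProductSpace 𝕜 H] {D : H →L[𝕜] H} (hD : D.IsPositive)
    {c : ℝ} (hc : 0 ≤ c) {e : H} (h : D (D e) = (c : 𝕜) ^ 2 • e) : D e = (c : 𝕜) • e := by
  rcases hc.eq_or_lt with rfl | hc
  · have hDe : inner 𝕜 (D e) (D e) = 0 := by
      rw [hD.inner_left_eq_inner_right, h]
      simp
    simpa using hDe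
  · set y := D e - (c : 𝕜) • e with hy
    have hDy : D y = ((-c : ℝ) : 𝕜) • y := by
      rw [hy, map_sub, map_smul, h, RCLike.ofReal_neg]
      module
    have hnonneg : 0 ≤ -c * ‖y‖ ^ 2 := by
      simpa only [hDy, inner_smul_real_left, RCLike.smul_re, inner_self_eq_norm_sq]
        using hD.re_inner_nonneg_left y
    have hnorm : ‖y‖ ^ 2 = 0 := by nlinarith [sq_nonneg ‖y‖]
    exact sub_eq_zero.mp (norm_eq_zero.mp (sq_eq_zero_iff.mp hnorm))

theorem inner_single_one_left [DecidableEq ι] (k : ι) (x : lp (fun _ : ι => 𝕜) 2) :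
    inner 𝕜 (lp.single 2 k (1 : 𝕜)) x = x k := by
  simp [lp.inner_single_left]

theorem coord_eq_mul_of_isPositive_of_sq_coord_eq
    {D : lp (fun _ : ι => 𝕜) 2 →L[𝕜] lp (fun _ : ι => 𝕜) 2} (hD : D.IsPositive)
    {k : ι} {c : ℝ} (hc : 0 ≤ c) (h : ∀ x, D (D x) k = (c : 𝕜) ^ 2 * x k)
    (x : lp (fun _ : ι => 𝕜) 2) : D x k = c * x k := by
  classical
  have hsq : D (D (lp.single 2 k 1)) = (c : 𝕜) ^ 2 • lp.single 2 k 1 := by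
    refine ext_inner_right 𝕜 fun y => ?_
    rw [hD.inner_left_eq_inner_right, hD.inner_left_eq_inner_right, inner_smul_left,
      inner_single_one_left, inner_single_one_left, h]
    simp
  rw [← inner_single_one_left, ← hD.inner_left_eq_inner_right,
    apply_eq_smul_of_isPositive_of_apply_apply_eq_sq_smul hD hc hsq, inner_smul_left,
    inner_single_one_left, RCLike.conj_ofReal]

end PositiveOperator

section DefectOperator

variable {𝕜 H : Type*} [RCLike 𝕜] [NormedAddCommGroup H] [InnerProductSpace 𝕜 H] [CompleteSpace H]

/-- `D` is the defect operator `D_A = (1 - A*A)^{1/2}` of `A`, characterised as the positive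
operator whose square is `1 - A*A`. -/
structure IsDefectOperator (D A : H →L[𝕜] H) : Prop where
  isPositive : D.IsPositive
  mul_self : D * D = 1 - adjoint A * A

theorem IsDefectOperator.mul_self_of_adjoint {D A : H →L[𝕜] H}
    (hD : IsDefectOperator D (adjoint A)) : D * D = 1 - A * adjoint A := by
  rw [hD.mul_self, adjoint_adjoint]

end DefectOperator

section StarAlgebra

variable {R A : Type*} [CommRing R] [StarRing R] [Ring A] [StarRing A] [Algebra R A]
  [StarModule R A]

theorem star_smul_one_add_smul_sub_mul_star_sq (a b : R) (T : A) :
    star (a • 1 + b • T) - (star b • T + star a • (T * T)) * star (T * T) =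
      star a • (1 - T * T * star (T * T)) + star b • (star T - T * star (T * T)) := by
  simp only [star_add, star_smul, star_one, add_mul, smul_mul_assoc]
  module

theorem star_smul_add_smul_sq_sub_mul_star_sq (a b : R) (T : A) :
    star (star b • T + star a • (T * T)) - (a • 1 + b • T) * star (T * T) =
      b • (star T - T * star (T * T)) := by
  simp only [star_add, star_smul, star_star, add_mul, smul_mul_assoc, one_mul]
  module

end StarAlgebra

section WeightedShift

variable {𝕜 : Type*} [RCLike 𝕜]

theorem ofReal_sqrt_one_sub_norm_sq_sq {E : Type*} [SeminormedAddGroup E] {z : E} (hz : ‖z‖ ≤ 1) :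
    ((√(1 - ‖z‖ ^ 2) : ℝ) : 𝕜) ^ 2 = 1 - (‖z‖ : 𝕜) ^ 2 := by
  exact_mod_cast Real.sq_sqrt (sub_nonneg.mpr (pow_le_one₀ (norm_nonneg z) hz))

/-- `T` is the unilateral weighted shift on `ℓ²` with weights `w`, that is, `T eₖ = wₖ eₖ₊₁` on the
standard basis. It is a predicate on a given bounded operator, so boundedness of `w` is implied. -/
structure IsWeightedShift_s12 (w : ℕ → 𝕜)
    (T : lp (fun _ : ℕ => 𝕜) 2 →L[𝕜] lp (fun _ : ℕ => 𝕜) 2) : Prop where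
  apply_zero : ∀ x, T x 0 = 0
  apply_succ : ∀ x k, T x (k + 1) = w k * x k

namespace IsWeightedShift_s12

variable {w : ℕ → 𝕜} {T D B : lp (fun _ : ℕ => 𝕜) 2 →L[𝕜] lp (fun _ : ℕ => 𝕜) 2}

theorem apply_single_one (hT : IsWeightedShift_s12 w T) (k : ℕ) :
    T (lp.single 2 k 1) = w k • lp.single 2 (k + 1) 1 := by
  ext j
  cases j with
  | zero => simp [hT.apply_zero]
  | succ j => by_cases hjk : j = k <;> simp [hT.apply_succ, hjk]

theorem adjoint_apply (hT : IsWeightedShift_s12 w T) (x : lp (fun _ : ℕ => 𝕜) 2) (k : ℕ) :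
    adjoint T x k = conj (w k) * x (k + 1) := by
  rw [← inner_single_one_left, adjoint_inner_right, hT.apply_single_one, inner_smul_left,
    inner_single_one_left]

theorem adjoint_sq_apply (hT : IsWeightedShift_s12 w T) (x : lp (fun _ : ℕ => 𝕜) 2) (k : ℕ) :
    adjoint (T * T) x k = conj (w k * w (k + 1)) * x (k + 2) := by
  rw [← star_eq_adjoint, star_mul, star_eq_adjoint, mul_apply_eq_comp, hT.adjoint_apply,
    hT.adjoint_apply, map_mul, mul_assoc]

theorem one_sub_sq_mul_adjoint_sq_apply_zero (hT : IsWeightedShift_s12 w T)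
    (x : lp (fun _ : ℕ => 𝕜) 2) : (1 - T * T * adjoint (T * T)) x 0 = x 0 := by
  simp [hT.apply_zero]

theorem one_sub_sq_mul_adjoint_sq_apply_one (hT : IsWeightedShift_s12 w T)
    (x : lp (fun _ : ℕ => 𝕜) 2) : (1 - T * T * adjoint (T * T)) x 1 = x 1 := by
  have hTT (y : lp (fun _ : ℕ => 𝕜) 2) : T (T y) 1 = 0 := by
    rw [hT.apply_succ _ 0, hT.apply_zero, mul_zero]
  simp [hTT]

theorem one_sub_sq_mul_adjoint_sq_apply_add_two (hT : IsWeightedShift_s12 w T)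
    (x : lp (fun _ : ℕ => 𝕜) 2) (k : ℕ) :
    (1 - T * T * adjoint (T * T)) x (k + 2) = (1 - (‖w k * w (k + 1)‖ : 𝕜) ^ 2) * x (k + 2) := by
  rw [← RCLike.mul_conj]
  simp only [sub_apply, one_apply_eq_self, mul_apply_eq_comp, AddSubgroupClass.coe_sub,
    PreLp.sub_apply, hT.apply_succ, hT.adjoint_sq_apply, map_mul]
  ring

theorem adjoint_sub_mul_adjoint_sq_apply_zero (hT : IsWeightedShift_s12 w T)
    (x : lp (fun _ : ℕ => 𝕜) 2) :
    (adjoint T - T * adjoint (T * T)) x 0 = conj (w 0) * x 1 := by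
  simp [hT.apply_zero, hT.adjoint_apply]

theorem adjoint_sub_mul_adjoint_sq_apply_succ (hT : IsWeightedShift_s12 w T)
    (x : lp (fun _ : ℕ => 𝕜) 2) (k : ℕ) :
    (adjoint T - T * adjoint (T * T)) x (k + 1) =
      (1 - (‖w k‖ : 𝕜) ^ 2) * conj (w (k + 1)) * x (k + 2) := by
  rw [← RCLike.mul_conj]
  simp only [sub_apply, mul_apply_eq_comp, AddSubgroupClass.coe_sub, PreLp.sub_apply,
    hT.adjoint_apply, hT.apply_succ, hT.adjoint_sq_apply, map_mul]
  ring

theorem defect_apply_zero (hT : IsWeightedShift_s12 w T) (hD : IsDefectOperator D (adjoint (T * T)))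
    (x : lp (fun _ : ℕ => 𝕜) 2) : D x 0 = x 0 := by
  simpa using coord_eq_mul_of_isPositive_of_sq_coord_eq hD.isPositive zero_le_one
    (fun y => by
      rw [← mul_apply_eq_comp, hD.mul_self_of_adjoint, hT.one_sub_sq_mul_adjoint_sq_apply_zero]
      simp) x

theorem defect_apply_one (hT : IsWeightedShift_s12 w T) (hD : IsDefectOperator D (adjoint (T * T)))
    (x : lp (fun _ : ℕ => 𝕜) 2) : D x 1 = x 1 := by
  simpa using coord_eq_mul_of_isPositive_of_sq_coord_eq hD.isPositive zero_le_one
    (fun y => by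
      rw [← mul_apply_eq_comp, hD.mul_self_of_adjoint, hT.one_sub_sq_mul_adjoint_sq_apply_one]
      simp) x

theorem defect_apply_add_two (hT : IsWeightedShift_s12 w T) (hD : IsDefectOperator D (adjoint (T * T)))
    {k : ℕ} (hw : ‖w k * w (k + 1)‖ ≤ 1) (x : lp (fun _ : ℕ => 𝕜) 2) :
    D x (k + 2) = (√(1 - ‖w k * w (k + 1)‖ ^ 2) : ℝ) * x (k + 2) := by
  refine coord_eq_mul_of_isPositive_of_sq_coord_eq hD.isPositive (Real.sqrt_nonneg _)
    (fun y => ?_) x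
  rw [← mul_apply_eq_comp, hD.mul_self_of_adjoint, hT.one_sub_sq_mul_adjoint_sq_apply_add_two,
    ofReal_sqrt_one_sub_norm_sq_sq hw]

theorem defect_mul_mul_defect (hT : IsWeightedShift_s12 w T) (hw₀ : ‖w 0‖ ≤ 1)
    (hw : ∀ k, ‖w (k + 1)‖ = 1) (hD : IsDefectOperator D (adjoint (T * T))) (a b : 𝕜)
    (hB₀ : ∀ x, B x 0 = a * x 0 + b * conj (w 0) * x 1)
    (hB₁ : ∀ x, B x 1 = a * x 1 + b * (√(1 - ‖w 0‖ ^ 2) : ℝ) * conj (w 1) * x 2)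
    (hB₂ : ∀ x, B x 2 = a * x 2) :
    D * B * D = a • (D * D) + b • (adjoint T - T * adjoint (T * T)) := by
  set s := √(1 - ‖w 0‖ ^ 2)
  have hs : (s : 𝕜) ^ 2 = 1 - (‖w 0‖ : 𝕜) ^ 2 := ofReal_sqrt_one_sub_norm_sq_sq hw₀
  have hD₀ := hT.defect_apply_zero hD
  have hD₁ := hT.defect_apply_one hD
  have hD₂ (x) : D x 2 = s * x 2 := by
    simpa [hw 0] using hT.defect_apply_add_two hD (k := 0) (by simpa [hw 0]) x
  have hD₃ (x) (k : ℕ) : D x (k + 3) = 0 := by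
    simpa [hw] using hT.defect_apply_add_two hD (k := k + 1) (by simp [hw]) x
  ext x j
  change D (B (D x)) j = a * D (D x) j + b * (adjoint T - T * adjoint (T * T)) x j
  match j with
  | 0 =>
    rw [hT.adjoint_sub_mul_adjoint_sq_apply_zero]
    simp only [hD₀, hD₁, hB₀]
    ring
  | 1 =>
    rw [hT.adjoint_sub_mul_adjoint_sq_apply_succ]
    simp only [hD₁, hD₂, hB₁]
    linear_combination b * conj (w 1) * x 2 * hs
  | 2 =>
    rw [hT.adjoint_sub_mul_adjoint_sq_apply_succ, hw]
    simp only [hD₂, hB₂, RCLike.ofReal_one]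
    ring
  | k + 3 =>
    rw [hT.adjoint_sub_mul_adjoint_sq_apply_succ, hD₃, hD₃, hw]
    simp

end IsWeightedShift_s12

theorem stmt12_general {w : ℕ → 𝕜} (hw₀ : ‖w 0‖ ≤ 1) (hw : ∀ k, ‖w (k + 1)‖ = 1)
    {T P D S S' B B' : lp (fun _ : ℕ => 𝕜) 2 →L[𝕜] lp (fun _ : ℕ => 𝕜) 2}
    (hT : IsWeightedShift_s12 w T) (hP : P = T * T)
    (hD : IsDefectOperator D (adjoint P)) (a b : 𝕜)
    (hS : S = a • 1 + b • T) (hS' : S' = conj b • T + conj a • (T * T))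
    (hB : ∀ x, B x 0 = conj a * x 0 + conj b * conj (w 0) * x 1 ∧
      B x 1 = conj a * x 1 + conj b * (√(1 - ‖w 0‖ ^ 2) : ℝ) * conj (w 1) * x 2 ∧
      B x 2 = conj a * x 2)
    (hB' : ∀ x, B' x 0 = b * conj (w 0) * x 1 ∧
      B' x 1 = b * (√(1 - ‖w 0‖ ^ 2) : ℝ) * conj (w 1) * x 2 ∧
      B' x 2 = 0) :
    adjoint S - S' * adjoint P = D * B * D ∧ adjoint S' - S * adjoint P = D * B' * D := by
  subst hP hS hS'
  have hDBD := hT.defect_mul_mul_defect hw₀ hw hD (conj a) (conj b)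
    (fun x => (hB x).1) (fun x => (hB x).2.1) (fun x => (hB x).2.2)
  have hDBD' := hT.defect_mul_mul_defect hw₀ hw hD 0 b
    (fun x => by simpa using (hB' x).1) (fun x => by simpa using (hB' x).2.1)
    (fun x => by simpa using (hB' x).2.2)
  rw [hDBD, hDBD', hD.mul_self_of_adjoint, zero_smul, zero_add]
  exact ⟨star_smul_one_add_smul_sub_mul_star_sq a b T,
    star_smul_add_smul_sq_sub_mul_star_sq a b T⟩

end WeightedShift

/-- With `T(x₁,x₂,…) = (0, αx₁, x₂, …)` on `ℓ²` (`α ∈ (0,1)`, coordinates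
indexed from `0`), `P = T²`, `S₁ = (n-2)I + 2T`, `S_{n-1} = 2T + (n-2)T²` for an integer
`n ≥ 3`, and with
`B₁ x = ((n-2)x₁ + 2αx₂, (n-2)x₂ + 2√(1-α²)x₃, (n-2)x₃, 0, 0, …)` and
`B_{n-1} x = (2αx₂, 2√(1-α²)x₃, 0, 0, …)`, one has
`S₁* - S_{n-1} P* = D_{P*} B₁ D_{P*}` and `S_{n-1}* - S₁ P* = D_{P*} B_{n-1} D_{P*}`. -/
theorem stmt12 (α : ℝ) (hα : 0 < α) (hα1 : α < 1)
    (T : ℓ² →L[ℂ] ℓ²)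
    (hT : ∀ x : ℓ², (T x) 0 = 0 ∧ (T x) 1 = (α : ℂ) * x 0 ∧ ∀ k : ℕ, (T x) (k + 2) = x (k + 1))
    (n : ℕ) (hn : 3 ≤ n)
    (S₁ : ℓ² →L[ℂ] ℓ²) (hS₁ : S₁ = ((n : ℂ) - 2) • (1 : ℓ² →L[ℂ] ℓ²) + (2 : ℂ) • T)
    (Sn₁ : ℓ² →L[ℂ] ℓ²) (hSn₁ : Sn₁ = (2 : ℂ) • T + ((n : ℂ) - 2) • (T * T))
    (P : ℓ² →L[ℂ] ℓ²) (hP : P = T * T)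
    (DPs : ℓ² →L[ℂ] ℓ²) (hDPspos : DPs.IsPositive)
    (hDPssq : DPs * DPs = 1 - P * adjoint P)
    (B₁ : ℓ² →L[ℂ] ℓ²)
    (hB₁ : ∀ x : ℓ²,
      (B₁ x) 0 = ((n : ℂ) - 2) * x 0 + 2 * (α : ℂ) * x 1 ∧
      (B₁ x) 1 = ((n : ℂ) - 2) * x 1 + 2 * (Real.sqrt (1 - α ^ 2) : ℂ) * x 2 ∧
      (B₁ x) 2 = ((n : ℂ) - 2) * x 2 ∧
      ∀ k : ℕ, 3 ≤ k → (B₁ x) k = 0)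
    (Bn₁ : ℓ² →L[ℂ] ℓ²)
    (hBn₁ : ∀ x : ℓ²,
      (Bn₁ x) 0 = 2 * (α : ℂ) * x 1 ∧
      (Bn₁ x) 1 = 2 * (Real.sqrt (1 - α ^ 2) : ℂ) * x 2 ∧
      ∀ k : ℕ, 2 ≤ k → (Bn₁ x) k = 0) :
    adjoint S₁ - Sn₁ * adjoint P = DPs * B₁ * DPs ∧
    adjoint Sn₁ - S₁ * adjoint P = DPs * Bn₁ * DPs := by
  have hw₀ : ‖(α : ℂ)‖ ≤ 1 := by simpa [abs_of_pos hα] using hα1.le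
  have hTw : IsWeightedShift_s12 (fun | 0 => (α : ℂ) | _ + 1 => 1) T :=
    ⟨fun x => (hT x).1, fun x k => by cases k <;> simp [(hT x).2]⟩
  have hD : IsDefectOperator DPs (adjoint P) := ⟨hDPspos, by rw [adjoint_adjoint, hDPssq]⟩
  exact stmt12_general hw₀ (fun _ => norm_one) hTw hP hD ((n : ℂ) - 2) 2 hS₁
    (by simpa [map_ofNat] using hSn₁)
    (fun x => by simpa [map_ofNat] using ⟨(hB₁ x).1, (hB₁ x).2.1, (hB₁ x).2.2.1⟩)
    (fun x => by simpa [map_ofNat] using ⟨(hBn₁ x).1, (hBn₁ x).2.1, (hBn₁ x).2.2 2 le_rfl⟩)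
end

section
/- Let $T$ on $\ell^2$ be given by $T(x_1,x_2,\dots)=(0,\alpha x_1,x_2,\dots)$, $\alpha\in(0,1)$, $P=T^2$, $S_1=(n-2)I+2T$ for an integer $n\ge 3$, and let $\mathcal{A}$ be the strong limit of $P^{*k}P^k$. Then $D_{P^*}S_1\mathcal{A} \ne D_{P^*}\mathcal{A}S_1$; explicitly, for $x=(x_1,x_2,\dots)\in\ell^2$, $D_{P^*}S_1\mathcal{A}x = (n-2)(\alpha^2 x_1, x_2, \sqrt{1-\alpha^2}x_3,0,\dots) + 2(0, \alpha^3 x_1, \sqrt{1-\alpha^2}x_2, 0,\dots)$ while $D_{P^*}\mathcal{A}S_1 x = (n-2)(\alpha^2 x_1, x_2, \sqrt{1-\alpha^2}x_3,0,\dots) + 2(0, \alpha x_1, \sqrt{1-\alpha^2}x_2, 0,\dots)$. -/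
open ContinuousLinearMap Filter

local notation "ℓ²" => lp (fun _ : ℕ => ℂ) 2

/-!
All operators involved are diagonal in the standard basis up to a shift of the coordinates. If `P`
shifts by `s` steps with weights `w`, then `P* P` is diagonal with entries `‖w k‖²`, and `1 - P P*`
is diagonal with entries `1` for the first `s` coordinates and `1 - ‖w k‖²` for the coordinate
`k + s`; the defect operator `D_{P*}` carries the square roots of the latter. For the weights
`(α, 1, 1, …)` all positive powers of `P` have the same weights, so `P*ᵏ Pᵏ` does not depend on
`k ≥ 1` and `𝒜` is diagonal with entries `(‖α‖², 1, 1, …)`. Since `T` maps coordinate `0`, where `𝒜`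
acts as `‖α‖²`, to coordinate `1`, where `𝒜` and `D_{P*}` act as `1`, the two products differ there.
-/

section

variable {𝕜 : Type*} [RCLike 𝕜]

theorem apply_eq_sqrt_smul_of_apply_apply_eq_smul {E : Type*} [NormedAddCommGroup E]
    [InnerProductSpace 𝕜 E] {D : E →ₗ[𝕜] E} (hD : D.IsPositive) {r : ℝ} {v : E}
    (hv : D (D v) = (r : 𝕜) • v) : D v = ((√r : ℝ) : 𝕜) • v := by
  rcases le_or_gt r 0 with hr | hr
  · have norm_sq : ‖D v‖ ^ 2 = r * ‖v‖ ^ 2 := by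
      rw [← inner_self_eq_norm_sq (𝕜 := 𝕜), hD.isSymmetric, hv, inner_smul_right,
        RCLike.re_ofReal_mul, inner_self_eq_norm_sq]
    have : ‖D v‖ ^ 2 ≤ 0 := norm_sq ▸ mul_nonpos_of_nonpos_of_nonneg hr (sq_nonneg _)
    have hDv : D v = 0 := by simpa using this.antisymm (sq_nonneg _)
    rw [hDv, Real.sqrt_eq_zero_of_nonpos hr, RCLike.ofReal_zero, zero_smul]
  · -- `u = D v - √r v` satisfies `D u = -√r u`, which positivity of `D` forbids unless `u = 0`.
    set u := D v - ((√r : ℝ) : 𝕜) • v with hu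
    have hDu : D u = ((-√r : ℝ) : 𝕜) • u := by
      have : (r : 𝕜) = ((√r : ℝ) : 𝕜) * ((√r : ℝ) : 𝕜) := by
        rw [← RCLike.ofReal_mul, Real.mul_self_sqrt hr.le]
      rw [hu, map_sub, map_smul, hv, this, RCLike.ofReal_neg]
      module
    have nonneg : 0 ≤ -√r * ‖u‖ ^ 2 := by
      have := hD.re_inner_nonneg_right u
      rwa [hDu, inner_smul_right, RCLike.re_ofReal_mul, inner_self_eq_norm_sq] at this
    have : ‖u‖ ^ 2 = 0 := by nlinarith [Real.sqrt_pos.2 hr, sq_nonneg ‖u‖]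
    exact sub_eq_zero.1 (by simpa using this)

theorem inner_lp_single_one {ι : Type*} [DecidableEq ι] (i : ι) (x : lp (fun _ : ι => 𝕜) 2) :
    inner 𝕜 (lp.single 2 i 1 : lp (fun _ : ι => 𝕜) 2) x = x i := by
  simp [lp.inner_single_left]

theorem lp_apply_eq_sqrt_mul_of_apply_apply_eq_mul {ι : Type*}
    {D : lp (fun _ : ι => 𝕜) 2 →ₗ[𝕜] lp (fun _ : ι => 𝕜) 2} (hD : D.IsPositive) {i : ι} {r : ℝ}
    (h : ∀ x, D (D x) i = r * x i) (x : lp (fun _ : ι => 𝕜) 2) :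
    D x i = ((√r : ℝ) : 𝕜) * x i := by
  classical
  let e : lp (fun _ : ι => 𝕜) 2 := lp.single 2 i 1
  have he : D (D e) = (r : 𝕜) • e := ext_inner_right 𝕜 fun y => by
    rw [hD.isSymmetric, hD.isSymmetric, inner_lp_single_one, h, inner_smul_left,
      inner_lp_single_one, RCLike.conj_ofReal]
  rw [← inner_lp_single_one, ← hD.isSymmetric, apply_eq_sqrt_smul_of_apply_apply_eq_smul hD he,
    inner_smul_left, inner_lp_single_one, RCLike.conj_ofReal]

end

local notation "ℓ²[" K "]" => lp (fun _ : ℕ => K) 2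

/-- `T` is the unilateral weighted shift by `s` steps with weights `w`, that is, `T eₖ = wₖ eₖ₊ₛ`
for the standard basis `e` of `ℓ²`; allowing several steps makes the notion closed under
composition. -/
structure IsWeightedShift_s13 {𝕜 : Type*} [RCLike 𝕜] (s : ℕ) (w : ℕ → 𝕜) (T : ℓ²[𝕜] →L[𝕜] ℓ²[𝕜]) :
    Prop where
  apply_of_lt : ∀ (x : ℓ²[𝕜]) {k : ℕ}, k < s → T x k = 0
  apply_add : ∀ (x : ℓ²[𝕜]) (k : ℕ), T x (k + s) = w k * x k

/-- The weight sequence `(a, 1, 1, …)` of the shift `T` in the theorem, with `a` at index `0`. -/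
def headWeight {R : Type*} [One R] (a : R) : ℕ → R
  | 0 => a
  | _ + 1 => 1

theorem headWeight_add_mul {R : Type*} [MulOneClass R] (a : R) {s : ℕ} (hs : s ≠ 0) (k : ℕ) :
    headWeight a (k + s) * headWeight a k = headWeight a k := by
  obtain ⟨t, rfl⟩ := Nat.exists_eq_succ_of_ne_zero hs
  exact one_mul _

namespace IsWeightedShift_s13

variable {𝕜 : Type*} [RCLike 𝕜] {s t : ℕ} {v w : ℕ → 𝕜} {α : 𝕜} {S T D : ℓ²[𝕜] →L[𝕜] ℓ²[𝕜]}

theorem mul (hS : IsWeightedShift_s13 s v S) (hT : IsWeightedShift_s13 t w T) :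
    IsWeightedShift_s13 (t + s) (fun k => v (k + t) * w k) (S * T) where
  apply_of_lt x k hk := by
    rw [mul_apply_eq_comp]
    rcases lt_or_ge k s with hks | hks
    · exact hS.apply_of_lt _ hks
    · obtain ⟨j, rfl⟩ := Nat.exists_eq_add_of_le' hks
      rw [hS.apply_add, hT.apply_of_lt x (by lia), mul_zero]
  apply_add x k := by
    rw [mul_apply_eq_comp, ← add_assoc, hS.apply_add, hT.apply_add, mul_assoc]

theorem map_single (hT : IsWeightedShift_s13 s w T) (k : ℕ) :
    T (lp.single 2 k 1) = w k • (lp.single 2 (k + s) 1 : ℓ²[𝕜]) := by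
  ext j
  rcases lt_or_ge j s with hj | hj
  · simp [hT.apply_of_lt _ hj, show j ≠ k + s by lia]
  · obtain ⟨i, rfl⟩ := Nat.exists_eq_add_of_le' hj
    rcases eq_or_ne i k with rfl | hik <;> simp [hT.apply_add, *]

theorem adjoint_apply_s13 (hT : IsWeightedShift_s13 s w T) (y : ℓ²[𝕜]) (k : ℕ) :
    adjoint T y k = star (w k) * y (k + s) := by
  rw [← inner_lp_single_one, adjoint_inner_right, hT.map_single, inner_smul_left,
    inner_lp_single_one, starRingEnd_apply]

theorem adjoint_apply_self_apply (hT : IsWeightedShift_s13 s w T) (x : ℓ²[𝕜]) (k : ℕ) :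
    adjoint T (T x) k = (‖w k‖ : 𝕜) ^ 2 * x k := by
  rw [hT.adjoint_apply_s13, hT.apply_add, ← mul_assoc, RCLike.star_def, RCLike.conj_mul]

theorem apply_adjoint_apply_add (hT : IsWeightedShift_s13 s w T) (y : ℓ²[𝕜]) (k : ℕ) :
    T (adjoint T y) (k + s) = (‖w k‖ : 𝕜) ^ 2 * y (k + s) := by
  rw [hT.apply_add, hT.adjoint_apply_s13, ← mul_assoc, RCLike.star_def, RCLike.mul_conj]

theorem defect_apply_of_lt (hT : IsWeightedShift_s13 s w T) (hD : D.IsPositive)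
    (hDD : D * D = 1 - T * adjoint T) (x : ℓ²[𝕜]) {k : ℕ} (hk : k < s) : D x k = x k := by
  have hsq (y : ℓ²[𝕜]) : D (D y) k = ((1 : ℝ) : 𝕜) * y k := by
    have : D (D y) = y - T (adjoint T y) := DFunLike.congr_fun hDD y
    simp [this, hT.apply_of_lt _ hk]
  simpa using lp_apply_eq_sqrt_mul_of_apply_apply_eq_mul hD.toLinearMap hsq x

theorem defect_apply_add (hT : IsWeightedShift_s13 s w T) (hD : D.IsPositive)
    (hDD : D * D = 1 - T * adjoint T) (x : ℓ²[𝕜]) (k : ℕ) :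
    D x (k + s) = ((√(1 - ‖w k‖ ^ 2) : ℝ) : 𝕜) * x (k + s) := by
  have hsq (y : ℓ²[𝕜]) : D (D y) (k + s) = ((1 - ‖w k‖ ^ 2 : ℝ) : 𝕜) * y (k + s) := by
    have : D (D y) = y - T (adjoint T y) := DFunLike.congr_fun hDD y
    simp [this, hT.apply_adjoint_apply_add, sub_mul]
  exact lp_apply_eq_sqrt_mul_of_apply_apply_eq_mul hD.toLinearMap hsq x

theorem smul_one_add_smul_apply_of_lt (hT : IsWeightedShift_s13 s w T) (b c : 𝕜) (x : ℓ²[𝕜]) {k : ℕ}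
    (hk : k < s) : (b • (1 : ℓ²[𝕜] →L[𝕜] ℓ²[𝕜]) + c • T) x k = b * x k := by
  change b * x k + c * T x k = b * x k
  rw [hT.apply_of_lt x hk, mul_zero, add_zero]

theorem smul_one_add_smul_apply_add (hT : IsWeightedShift_s13 s w T) (b c : 𝕜) (x : ℓ²[𝕜]) (k : ℕ) :
    (b • (1 : ℓ²[𝕜] →L[𝕜] ℓ²[𝕜]) + c • T) x (k + s) = b * x (k + s) + c * (w k * x k) :=
  congrArg (b * x (k + s) + c * ·) (hT.apply_add x k)

theorem one_headWeight_of_apply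
    (hT : ∀ x : ℓ²[𝕜], T x 0 = 0 ∧ T x 1 = α * x 0 ∧ ∀ k : ℕ, T x (k + 2) = x (k + 1)) :
    IsWeightedShift_s13 1 (headWeight α) T where
  apply_of_lt x k hk := by
    rw [Nat.lt_one_iff.1 hk]
    exact (hT x).1
  apply_add x k := by
    cases k with
    | zero => exact (hT x).2.1
    | succ k => simpa [headWeight] using (hT x).2.2 k

theorem defect_headWeight_apply_of_lt (hT : IsWeightedShift_s13 s (headWeight α) T) (hD : D.IsPositive)
    (hDD : D * D = 1 - T * adjoint T) (x : ℓ²[𝕜]) {k : ℕ} (hk : s < k) : D x k = 0 := by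
  obtain ⟨j, rfl⟩ := Nat.exists_eq_add_of_lt hk
  rw [add_assoc, add_comm s]
  simpa [headWeight] using hT.defect_apply_add hD hDD x (j + 1)

theorem mul_headWeight (hS : IsWeightedShift_s13 s (headWeight α) S)
    (hT : IsWeightedShift_s13 t (headWeight α) T) (ht : t ≠ 0) :
    IsWeightedShift_s13 (t + s) (headWeight α) (S * T) := by
  simpa only [headWeight_add_mul α ht] using hS.mul hT

theorem pow_headWeight (hT : IsWeightedShift_s13 s (headWeight α) T) (hs : s ≠ 0) (m : ℕ) :
    IsWeightedShift_s13 ((m + 1) * s) (headWeight α) (T ^ (m + 1)) := by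
  induction m with
  | zero => simpa using hT
  | succ m ih =>
    rw [pow_succ, Nat.succ_mul, add_comm]
    exact ih.mul_headWeight hT hs

theorem asymptoticLimit_headWeight_apply (hT : IsWeightedShift_s13 s (headWeight α) T) (hs : s ≠ 0)
    {x y : ℓ²[𝕜]} (h : Tendsto (fun m : ℕ => (adjoint T ^ m * T ^ m) x) atTop (nhds y)) (k : ℕ) :
    y k = (‖headWeight α k‖ : 𝕜) ^ 2 * x k := by
  have hconst (m : ℕ) : (adjoint T ^ (m + 1) * T ^ (m + 1)) x k =
      (‖headWeight α k‖ : 𝕜) ^ 2 * x k := by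
    rw [← star_eq_adjoint, ← star_pow]
    exact (hT.pow_headWeight hs m).adjoint_apply_self_apply x k
  have hcoord := ((lp.evalCLM 𝕜 (fun _ : ℕ => 𝕜) 2 k).continuous.tendsto y).comp
    (h.comp (tendsto_add_atTop_nat 1))
  exact tendsto_nhds_unique hcoord (tendsto_const_nhds.congr fun m => (hconst m).symm)

end IsWeightedShift_s13

theorem stmt13_general {𝕜 : Type*} [RCLike 𝕜] (α : 𝕜) (hα : α ≠ 0) (hα1 : ‖α‖ ≠ 1)
    (T : ℓ²[𝕜] →L[𝕜] ℓ²[𝕜])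
    (hT : ∀ x : ℓ²[𝕜], T x 0 = 0 ∧ T x 1 = α * x 0 ∧ ∀ k : ℕ, T x (k + 2) = x (k + 1))
    (b c : 𝕜) (hc : c ≠ 0)
    (S : ℓ²[𝕜] →L[𝕜] ℓ²[𝕜]) (hS : S = b • (1 : ℓ²[𝕜] →L[𝕜] ℓ²[𝕜]) + c • T)
    (P : ℓ²[𝕜] →L[𝕜] ℓ²[𝕜]) (hP : P = T * T)
    (A : ℓ²[𝕜] →L[𝕜] ℓ²[𝕜])
    (hA : ∀ x : ℓ²[𝕜],
      Tendsto (fun k : ℕ => ((adjoint P) ^ k * P ^ k) x) atTop (nhds (A x)))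
    (D : ℓ²[𝕜] →L[𝕜] ℓ²[𝕜]) (hDpos : D.IsPositive) (hDsq : D * D = 1 - P * adjoint P) :
    D * S * A ≠ D * A * S ∧
    (∀ x : ℓ²[𝕜],
      D (S (A x)) 0 = b * (‖α‖ : 𝕜) ^ 2 * x 0 ∧
      D (S (A x)) 1 = b * x 1 + c * ((‖α‖ : 𝕜) ^ 2 * α) * x 0 ∧
      D (S (A x)) 2 = b * (√(1 - ‖α‖ ^ 2) : ℝ) * x 2 + c * (√(1 - ‖α‖ ^ 2) : ℝ) * x 1 ∧
      ∀ k : ℕ, 3 ≤ k → D (S (A x)) k = 0) ∧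
    (∀ x : ℓ²[𝕜],
      D (A (S x)) 0 = b * (‖α‖ : 𝕜) ^ 2 * x 0 ∧
      D (A (S x)) 1 = b * x 1 + c * α * x 0 ∧
      D (A (S x)) 2 = b * (√(1 - ‖α‖ ^ 2) : ℝ) * x 2 + c * (√(1 - ‖α‖ ^ 2) : ℝ) * x 1 ∧
      ∀ k : ℕ, 3 ≤ k → D (A (S x)) k = 0) := by
  have hT' : IsWeightedShift_s13 1 (headWeight α) T := .one_headWeight_of_apply hT
  have hP' : IsWeightedShift_s13 2 (headWeight α) P := hP ▸ hT'.mul_headWeight hT' one_ne_zero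
  have hS0 (x : ℓ²[𝕜]) : S x 0 = b * x 0 :=
    hS ▸ hT'.smul_one_add_smul_apply_of_lt b c x one_pos
  have hS1 (x : ℓ²[𝕜]) : S x 1 = b * x 1 + c * (α * x 0) :=
    hS ▸ hT'.smul_one_add_smul_apply_add b c x 0
  have hS2 (x : ℓ²[𝕜]) : S x 2 = b * x 2 + c * (1 * x 1) :=
    hS ▸ hT'.smul_one_add_smul_apply_add b c x 1
  have hA0 (x : ℓ²[𝕜]) : A x 0 = (‖α‖ : 𝕜) ^ 2 * x 0 :=
    hP'.asymptoticLimit_headWeight_apply two_ne_zero (hA x) 0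
  have hA_succ (x : ℓ²[𝕜]) (k : ℕ) : A x (k + 1) = x (k + 1) := by
    simpa [headWeight] using hP'.asymptoticLimit_headWeight_apply two_ne_zero (hA x) (k + 1)
  have hD0 (x : ℓ²[𝕜]) : D x 0 = x 0 := hP'.defect_apply_of_lt hDpos hDsq x two_pos
  have hD1 (x : ℓ²[𝕜]) : D x 1 = x 1 := hP'.defect_apply_of_lt hDpos hDsq x one_lt_two
  have hD2 (x : ℓ²[𝕜]) : D x 2 = (√(1 - ‖α‖ ^ 2) : ℝ) * x 2 :=
    hP'.defect_apply_add hDpos hDsq x 0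
  have hD3 (x : ℓ²[𝕜]) (k : ℕ) (hk : 3 ≤ k) : D x k = 0 :=
    hP'.defect_headWeight_apply_of_lt hDpos hDsq x hk
  have hSA1 (x : ℓ²[𝕜]) : D (S (A x)) 1 = b * x 1 + c * ((‖α‖ : 𝕜) ^ 2 * α) * x 0 := by
    rw [hD1, hS1, hA0, hA_succ]; ring
  have hAS1 (x : ℓ²[𝕜]) : D (A (S x)) 1 = b * x 1 + c * α * x 0 := by
    rw [hD1, hA_succ, hS1]; ring
  refine ⟨fun h => ?_, fun x => ⟨?_, hSA1 x, ?_, hD3 _⟩, fun x => ⟨?_, hAS1 x, ?_, hD3 _⟩⟩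
  · have key : D (S (A (lp.single 2 0 1))) 1 = D (A (S (lp.single 2 0 1))) 1 :=
      congrArg (· 1) (DFunLike.congr_fun h (lp.single 2 0 1))
    have : (‖α‖ : 𝕜) ^ 2 = 1 := by simpa [hSA1, hAS1, hα, hc] using key
    exact hα1 ((pow_eq_one_iff_of_nonneg (norm_nonneg α) two_ne_zero).1 (mod_cast this))
  · rw [hD0, hS0, hA0]; ring
  · rw [hD2, hS2, hA_succ, hA_succ]; ring
  · rw [hD0, hA0, hS0]; ring
  · rw [hD2, hA_succ, hS2]; ring

/-- With `T(x₁,x₂,…) = (0, αx₁, x₂, …)` on `ℓ²` (`α ∈ (0,1)`, coordinates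
indexed from `0`), `P = T²`, `S₁ = (n-2)I + 2T` for an integer `n ≥ 3`, and `𝒜` the strong
limit of `P*ᵏPᵏ`, one has `D_{P*} S₁ 𝒜 ≠ D_{P*} 𝒜 S₁`; explicitly
`D_{P*}S₁𝒜 x = (n-2)(α²x₁, x₂, √(1-α²)x₃, 0, …) + 2(0, α³x₁, √(1-α²)x₂, 0, …)` while
`D_{P*}𝒜S₁ x = (n-2)(α²x₁, x₂, √(1-α²)x₃, 0, …) + 2(0, αx₁, √(1-α²)x₂, 0, …)`. -/
theorem stmt13 (α : ℝ) (hα : 0 < α) (hα1 : α < 1)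
    (T : ℓ² →L[ℂ] ℓ²)
    (hT : ∀ x : ℓ², (T x) 0 = 0 ∧ (T x) 1 = (α : ℂ) * x 0 ∧ ∀ k : ℕ, (T x) (k + 2) = x (k + 1))
    (n : ℕ) (hn : 3 ≤ n)
    (S₁ : ℓ² →L[ℂ] ℓ²) (hS₁ : S₁ = ((n : ℂ) - 2) • (1 : ℓ² →L[ℂ] ℓ²) + (2 : ℂ) • T)
    (P : ℓ² →L[ℂ] ℓ²) (hP : P = T * T)
    (A : ℓ² →L[ℂ] ℓ²)
    (hA : ∀ x : ℓ²,
      Tendsto (fun k : ℕ => ((adjoint P) ^ k * P ^ k) x) atTop (nhds (A x)))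
    (DPs : ℓ² →L[ℂ] ℓ²) (hDPspos : DPs.IsPositive)
    (hDPssq : DPs * DPs = 1 - P * adjoint P) :
    DPs * S₁ * A ≠ DPs * A * S₁ ∧
    (∀ x : ℓ²,
      (DPs (S₁ (A x))) 0 = ((n : ℂ) - 2) * (α : ℂ) ^ 2 * x 0 ∧
      (DPs (S₁ (A x))) 1 = ((n : ℂ) - 2) * x 1 + 2 * (α : ℂ) ^ 3 * x 0 ∧
      (DPs (S₁ (A x))) 2 = ((n : ℂ) - 2) * (Real.sqrt (1 - α ^ 2) : ℂ) * x 2 +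
        2 * (Real.sqrt (1 - α ^ 2) : ℂ) * x 1 ∧
      (∀ k : ℕ, 3 ≤ k → (DPs (S₁ (A x))) k = 0)) ∧
    (∀ x : ℓ²,
      (DPs (A (S₁ x))) 0 = ((n : ℂ) - 2) * (α : ℂ) ^ 2 * x 0 ∧
      (DPs (A (S₁ x))) 1 = ((n : ℂ) - 2) * x 1 + 2 * (α : ℂ) * x 0 ∧
      (DPs (A (S₁ x))) 2 = ((n : ℂ) - 2) * (Real.sqrt (1 - α ^ 2) : ℂ) * x 2 +
        2 * (Real.sqrt (1 - α ^ 2) : ℂ) * x 1 ∧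
      (∀ k : ℕ, 3 ≤ k → (DPs (A (S₁ x))) k = 0)) := by
  have hnorm : ‖(α : ℂ)‖ = α := Complex.norm_of_nonneg hα.le
  simpa only [hnorm, pow_succ (α : ℂ) 2, RCLike.ofReal_eq_complex_ofReal] using
    stmt13_general (α : ℂ) (Complex.ofReal_ne_zero.2 hα.ne') (hnorm.trans_ne hα1.ne) T hT
      (n - 2) 2 two_ne_zero S₁ hS₁ P hP A hA DPs hDPspos hDPssq
end
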